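/- The set Ξ ∪ {0} is closed in ℝ, perfect (closed with no isolated points), totally disconnected, and has Lebesgue measure zero. -/

import Mathlib

/-- The set `Ξ` of Head's angles: angles `θ ∈ (0, 1/2]` with `2^k θ ∈ [θ, 1] (mod ℤ)`
for all `k ≥ 0`. -/
def HeadXi : Set ℝ :=
  {θ : ℝ | 0 < θ ∧ θ ≤ 1/2 ∧ ∀ k : ℕ, ∃ n : ℤ, θ ≤ 2 ^ k * θ - n ∧ 2 ^ k * θ - n ≤ 1}

/-! `Ξ ∪ {0}` is the case `b = 2` of the set of `θ ∈ [0, 1)` whose orbit under multiplication by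
`b ≥ 2` on `ℝ/ℤ` never enters the open arc `(0, θ)`.

Avoiding an open arc is a closed condition on `θ`, and so is `θ < 1` here: if `1 - 1/b < θ < 1`,
then `b * θ` already lies in the arc.

If `θ` is not `b`-adic, rounding it up to `N` digits gives other points of the set, converging to
`θ`. If `θ ≠ 0` is `b`-adic, its orbit never returns to `θ`, because `b ^ k - 1` is coprime to `b`;
this leaves room to replace `θ` by `θ - b ^ (-p)` for every large `p`. Finally, `0` is the limit of
`b ^ (-p)`.

Multiplication by `b` on `ℝ/ℤ` is ergodic, so almost every orbit enters the arc `(0, ε)`. Hence the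
set is null, and a null subset of the line contains no interval. -/

open Set Filter Topology MeasureTheory

section OrderedRing

variable {R : Type*} [Ring R] [LinearOrder R] [IsStrictOrderedRing R]

theorem intCast_add_le_intCast {m n : ℤ} {y : R} (hy : y ≤ 1) (h : (n : R) < m) :
    n + y ≤ m := by
  have : (n : R) + 1 ≤ m := by exact_mod_cast h
  grw [hy, this]

theorem exists_int_le_sub_and_sub_le_one_iff [FloorRing R] {θ x : R} :
    (∃ n : ℤ, θ ≤ x - n ∧ x - n ≤ 1) ↔ ∀ n : ℤ, n < x → n + θ ≤ x := by
  constructor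
  · rintro ⟨m, hθ, h1⟩ n hn
    have hnm : n < m + 1 := by exact_mod_cast hn.trans_le (sub_le_iff_le_add'.mp h1)
    have : (n : R) ≤ m := by exact_mod_cast Int.lt_add_one_iff.mp hnm
    grw [this]
    exact le_sub_iff_add_le'.mp hθ
  · refine fun h ↦ ⟨⌈x⌉ - 1, le_sub_iff_add_le'.mpr (h _ (Int.lt_ceil.mp (by lia))), ?_⟩
    rw [Int.cast_sub, Int.cast_one, sub_le_comm, sub_le_sub_iff_right]
    exact Int.le_ceil x

end OrderedRing

theorem exists_eq_intCast_of_pow_mul_eq {R : Type*} [CommRing R] [IsDomain R] [CharZero R]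
    {b N k : ℕ} (hb : b ≠ 0) (hk : k ≠ 0) {θ : R} {M n : ℤ} (hM : b ^ N * θ = M)
    (hn : b ^ k * θ = n + θ) : ∃ m : ℤ, θ = m := by
  have hMn : ((b : ℤ) ^ k - 1) * M = b ^ N * n := by
    have : ((b : R) ^ k - 1) * M = b ^ N * n := by rw [← hM]; linear_combination (b : R) ^ N * hn
    exact_mod_cast this
  have hcop : IsCoprime ((b : ℤ) ^ N) (b ^ k - 1) :=
    ((IsCoprime.pow_left_iff (Nat.pos_of_ne_zero hk)).mp ⟨1, -1, by ring⟩).pow_left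
  obtain ⟨m, rfl⟩ := hcop.dvd_of_dvd_mul_left ⟨n, hMn⟩
  refine ⟨m, mul_left_cancel₀ (pow_ne_zero N (Nat.cast_ne_zero.mpr hb)) ?_⟩
  exact_mod_cast hM

theorem inv_pow_le_of_pow_mul_eq_intCast {K : Type*} [Field K] [LinearOrder K]
    [IsStrictOrderedRing K] {b N : ℕ} {θ : K} (hθ : 0 < θ) (hb : b ≠ 0) {M : ℤ}
    (hM : b ^ N * θ = M) : ((b : K) ^ N)⁻¹ ≤ θ := by
  have hpos : (0 : K) < b ^ N := by positivity
  have : 0 < M := by exact_mod_cast hM ▸ mul_pos hpos hθ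
  rw [inv_le_iff_one_le_mul₀' hpos, hM]
  exact_mod_cast this

theorem measure_forall_iterate_notMem_eq_zero_of_ergodic {α : Type*} [MeasurableSpace α]
    {μ : Measure α} [IsFiniteMeasure μ] {f : α → α} (hf : Ergodic f μ) {U : Set α}
    (hU : NullMeasurableSet U μ) (hU0 : μ U ≠ 0) : μ {x | ∀ k, f^[k] x ∉ U} = 0 := by
  have hE : NullMeasurableSet {x | ∀ k, f^[k] x ∉ U} μ := by
    simp only [ofPred_forall]
    exact .iInter fun k ↦
      hU.compl.preimage (hf.toMeasurePreserving.iterate k).quasiMeasurePreserving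
  have hsub : {x | ∀ k, f^[k] x ∉ U} ⊆ f ⁻¹' {x | ∀ k, f^[k] x ∉ U} := fun x hx k ↦ hx (k + 1)
  rcases hf.ae_empty_or_univ_of_ae_le_preimage hE hsub.eventuallyLE with h | h
  · exact ae_eq_empty.mp h
  · exact absurd (measure_mono_null (fun x hx hE ↦ hE 0 hx) (ae_eq_univ.mp h)) hU0

/-- The angles `θ ∈ [0, 1)` whose orbit under multiplication by `b` on `ℝ/ℤ` never enters the open
arc `(0, θ)`: no `b ^ k * θ` lies strictly between an integer `n` and `n + θ`. For `b = 2` this is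
Head's `Ξ`, together with `0`. -/
def arcAvoidingAngles (b : ℕ) : Set ℝ :=
  {θ | θ ∈ Ico 0 1 ∧ ∀ (k : ℕ) (n : ℤ), n < b ^ k * θ → n + θ ≤ b ^ k * θ}

namespace arcAvoidingAngles

variable {b k N p : ℕ} {θ : ℝ}

theorem pow_mul_le_pow_sub_one (hb : 1 < b) (hθ : θ ∈ arcAvoidingAngles b) (hk : k ≠ 0) :
    b ^ k * θ ≤ b ^ k - 1 := by
  by_contra! h
  have h1 : (1 : ℝ) < b ^ k := one_lt_pow₀ (by exact_mod_cast hb) hk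
  have := hθ.2 k (b ^ k - 1) (by exact_mod_cast h)
  push_cast at this
  nlinarith [hθ.1.2]

theorem add_inv_pow_le_one (hb : 1 < b) (hθ : θ ∈ arcAvoidingAngles b) (hk : k ≠ 0) :
    θ + ((b : ℝ) ^ k)⁻¹ ≤ 1 := by
  have hpos : (0 : ℝ) < b ^ k := by positivity
  refine le_of_mul_le_mul_left ?_ hpos
  rw [mul_add, mul_inv_cancel₀ hpos.ne', mul_one, ← le_sub_iff_add_le]
  exact pow_mul_le_pow_sub_one hb hθ hk

theorem eq_setOf_mul_le_sub_one (hb : 1 < b) : arcAvoidingAngles b =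
    {θ : ℝ | 0 ≤ θ ∧ b * θ ≤ b - 1 ∧ ∀ (k : ℕ) (n : ℤ), n < b ^ k * θ → n + θ ≤ b ^ k * θ} := by
  ext θ
  have : (0 : ℝ) < b := by positivity
  refine ⟨fun hθ ↦ ⟨hθ.1.1, ?_, hθ.2⟩, fun ⟨h0, h1, h⟩ ↦ ⟨⟨h0, by nlinarith⟩, h⟩⟩
  simpa using pow_mul_le_pow_sub_one hb hθ one_ne_zero

protected theorem isClosed (hb : 1 < b) : IsClosed (arcAvoidingAngles b) := by
  simp only [eq_setOf_mul_le_sub_one hb, ofPred_and, ofPred_forall]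
  refine isClosed_Ici.inter <| (isClosed_le (by fun_prop) (by fun_prop)).inter <|
    isClosed_iInter fun k ↦ isClosed_iInter fun n ↦
      isClosed_imp (isOpen_lt ?_ ?_) (isClosed_le ?_ ?_) <;> fun_prop

theorem ceil_le_pow_mul_ceil_sub (hb : b ≠ 0) (hθ : θ ∈ arcAvoidingAngles b) {r : ℕ} {n : ℤ}
    (hn : b ^ r * n < ⌈b ^ (k + r) * θ⌉) :
    ⌈b ^ (k + r) * θ⌉ ≤ b ^ k * (⌈b ^ (k + r) * θ⌉ - b ^ r * n) := by
  have hr : (0 : ℝ) < b ^ r := by positivity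
  have hnθ : (n : ℝ) < b ^ k * θ := by
    have := Int.lt_ceil.mp hn
    push_cast at this
    rw [pow_add, mul_comm ((b : ℝ) ^ k), mul_assoc] at this
    exact lt_of_mul_lt_mul_left this hr.le
  have hgap : b ^ r * θ ≤ b ^ (k + r) * θ - b ^ r * n := by
    linear_combination (b : ℝ) ^ r * hθ.2 k n hnθ
  refine Int.ceil_le.mpr ?_
  push_cast
  calc (b : ℝ) ^ (k + r) * θ = b ^ k * (b ^ r * θ) := by ring
    _ ≤ b ^ k * (b ^ (k + r) * θ - b ^ r * n) := by gcongr
    _ ≤ b ^ k * (⌈b ^ (k + r) * θ⌉ - b ^ r * n) := by gcongr; exact Int.le_ceil _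

theorem mem_of_pow_mul_eq_intCast (hθ : θ ∈ Ico 0 1) {M : ℤ} (hM : b ^ N * θ = M)
    (h : ∀ k ≠ 0, k < N → ∀ n : ℤ, n < b ^ k * θ → n + θ ≤ b ^ k * θ) :
    θ ∈ arcAvoidingAngles b := by
  refine ⟨hθ, fun k n hn ↦ ?_⟩
  rcases eq_or_ne k 0 with rfl | hk0
  · rw [pow_zero, one_mul] at hn ⊢
    have : n < 1 := by exact_mod_cast hn.trans hθ.2
    have : (n : ℝ) ≤ 0 := by exact_mod_cast Int.lt_add_one_iff.mp this
    linarith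
  rcases lt_or_ge k N with hk | hk
  · exact h k hk0 hk n hn
  · obtain ⟨r, rfl⟩ := Nat.exists_eq_add_of_le hk
    have hint : b ^ (N + r) * θ = (b ^ r * M : ℤ) := by
      push_cast; rw [← hM]; ring
    rw [hint] at hn ⊢
    exact intCast_add_le_intCast hθ.2.le hn

theorem ceil_div_pow_mem (hb : 1 < b) (hθ : θ ∈ arcAvoidingAngles b) (hN : N ≠ 0) :
    ⌈b ^ N * θ⌉ / (b : ℝ) ^ N ∈ arcAvoidingAngles b := by
  have hpos (j : ℕ) : (0 : ℝ) < b ^ j := by positivity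
  have hceil : (0 : ℝ) ≤ ⌈b ^ N * θ⌉ := (mul_nonneg (hpos N).le hθ.1.1).trans (Int.le_ceil _)
  have hlt : ⌈b ^ N * θ⌉ / (b : ℝ) ^ N < 1 := by
    have : ⌈b ^ N * θ⌉ ≤ (b : ℤ) ^ N - 1 :=
      Int.ceil_le.mpr (by exact_mod_cast pow_mul_le_pow_sub_one hb hθ hN)
    rw [div_lt_one (hpos N)]
    exact_mod_cast Int.lt_of_le_sub_one this
  refine mem_of_pow_mul_eq_intCast ⟨by positivity, hlt⟩ (mul_div_cancel₀ _ (hpos N).ne')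
    fun k _ hk n hn ↦ ?_
  obtain ⟨r, rfl⟩ := Nat.exists_eq_add_of_le hk.le
  have hshift : (b : ℝ) ^ k * (⌈b ^ (k + r) * θ⌉ / b ^ (k + r)) = ⌈b ^ (k + r) * θ⌉ / b ^ r := by
    rw [pow_add]; field_simp
  rw [hshift] at hn ⊢
  rw [lt_div_iff₀' (hpos r)] at hn
  have hgap : (⌈b ^ (k + r) * θ⌉ : ℝ) ≤ b ^ k * (⌈b ^ (k + r) * θ⌉ - b ^ r * n) := by
    exact_mod_cast ceil_le_pow_mul_ceil_sub (by lia) hθ (by exact_mod_cast hn)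
  rw [← le_sub_iff_add_le', div_le_iff₀ (hpos _)]
  refine hgap.trans_eq ?_
  rw [pow_add]; field_simp

theorem inv_pow_mem (hb : 1 < b) (hp : p ≠ 0) : ((b : ℝ) ^ p)⁻¹ ∈ arcAvoidingAngles b := by
  have hb1 : (1 : ℝ) < b := by exact_mod_cast hb
  have hp1 : ((b : ℝ) ^ p)⁻¹ < 1 := inv_lt_one_of_one_lt₀ (one_lt_pow₀ hb1 hp)
  have hM : (b : ℝ) ^ p * ((b : ℝ) ^ p)⁻¹ = (1 : ℤ) := by
    rw [Int.cast_one]; exact mul_inv_cancel₀ (by positivity)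
  refine mem_of_pow_mul_eq_intCast ⟨by positivity, hp1⟩ hM fun k _ hk n hn ↦ ?_
  have hlt : (b : ℝ) ^ k * ((b : ℝ) ^ p)⁻¹ < 1 := by
    rw [mul_inv_lt_iff₀ (by positivity), one_mul]
    exact pow_lt_pow_right₀ hb1 hk
  have hle : ((b : ℝ) ^ p)⁻¹ ≤ (b : ℝ) ^ k * ((b : ℝ) ^ p)⁻¹ :=
    le_mul_of_one_le_left (by positivity) (one_le_pow₀ hb1.le)
  have hn1 : n < 1 := by exact_mod_cast hn.trans hlt
  have hn0 : (n : ℝ) ≤ 0 := by exact_mod_cast Int.lt_add_one_iff.mp hn1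
  linarith

theorem add_add_inv_pow_le (hb : b ≠ 0) (hθ : θ ∈ arcAvoidingAngles b) (hθ0 : θ ≠ 0) {M : ℤ}
    (hM : b ^ N * θ = M) (hk : k ≠ 0) {n : ℤ} (hn : n < b ^ k * θ) :
    n + θ + ((b : ℝ) ^ N)⁻¹ ≤ b ^ k * θ := by
  have hpos : (0 : ℝ) < b ^ N := by positivity
  have hne : n + θ ≠ b ^ k * θ := by
    intro h
    obtain ⟨m, rfl⟩ := exists_eq_intCast_of_pow_mul_eq hb hk hM h.symm
    have h0 : 0 ≤ m := by exact_mod_cast hθ.1.1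
    have h1 : m < 1 := by exact_mod_cast hθ.1.2
    exact hθ0 (by exact_mod_cast (by lia : m = 0))
  have hint : (b ^ N * n + M + 1 : ℝ) ≤ b ^ k * M := by
    have : (b ^ N * n + M : ℝ) < b ^ k * M := by
      rw [← hM]
      linear_combination (b : ℝ) ^ N * (hθ.2 k n hn).lt_of_ne hne
    exact_mod_cast this
  rw [← hM] at hint
  refine le_of_mul_le_mul_left ?_ hpos
  rw [mul_add, mul_inv_cancel₀ hpos.ne']
  linarith

theorem sub_inv_pow_mem (hb : 1 < b) (hθ : θ ∈ arcAvoidingAngles b) (hθ0 : θ ≠ 0) {M : ℤ}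
    (hM : b ^ N * θ = M) (hp : 2 * N ≤ p) : θ - ((b : ℝ) ^ p)⁻¹ ∈ arcAvoidingAngles b := by
  have hb1 : (1 : ℝ) < b := by exact_mod_cast hb
  have hb0 : b ≠ 0 := by lia
  have hδ : 0 < ((b : ℝ) ^ p)⁻¹ := by positivity
  have hshift {k j : ℕ} (h : k + j ≤ p) : (b : ℝ) ^ k * ((b : ℝ) ^ p)⁻¹ ≤ ((b : ℝ) ^ j)⁻¹ := by
    rw [mul_inv_le_iff₀ (by positivity), inv_mul_eq_div, le_div_iff₀ (by positivity), ← pow_add]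
    exact pow_le_pow_right₀ hb1.le h
  have hnonneg : 0 ≤ θ - ((b : ℝ) ^ p)⁻¹ := by
    have := hshift (k := 0) (j := N) (by lia)
    linarith [inv_pow_le_of_pow_mul_eq_intCast (hθ.1.1.lt_of_ne' hθ0) hb0 hM]
  have hint {k : ℕ} (hk : N ≤ k) : b ^ k * θ = (b ^ (k - N) * M : ℤ) := by
    push_cast; rw [← hM, ← mul_assoc, pow_sub_mul_pow _ hk]
  have hadic : b ^ p * (θ - ((b : ℝ) ^ p)⁻¹) = (b ^ (p - N) * M - 1 : ℤ) := by
    rw [mul_sub, mul_inv_cancel₀ (by positivity), hint (by lia), Int.cast_sub, Int.cast_one]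
  refine mem_of_pow_mul_eq_intCast ⟨hnonneg, by linarith [hθ.1.2]⟩ hadic fun k hk0 hkp n hn ↦ ?_
  rw [mul_sub] at hn ⊢
  have hk : 0 < (b : ℝ) ^ k * ((b : ℝ) ^ p)⁻¹ := by positivity
  rcases lt_or_ge k N with hkN | hkN
  · linarith [add_add_inv_pow_le hb0 hθ hθ0 hM hk0 (n := n) (by linarith),
      hshift (k := k) (j := N) (by lia)]
  · -- Between times `N` and `p` the orbit of `θ` is `0` and the new one is in `[1 - 1/b, 1)`.
    rw [hint hkN] at hn ⊢
    linarith [hshift (k := k) (j := 1) hkp, intCast_add_le_intCast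
      (add_inv_pow_le_one hb hθ one_ne_zero) (n := n) (m := b ^ (k - N) * M) (by linarith)]

theorem preperfect (hb : 1 < b) : Preperfect (arcAvoidingAngles b) := by
  intro θ hθ
  have hpow : Tendsto (fun p : ℕ ↦ (b : ℝ) ^ p) atTop atTop :=
    tendsto_pow_atTop_atTop_of_one_lt (by exact_mod_cast hb)
  have hinv : Tendsto (fun p : ℕ ↦ ((b : ℝ) ^ p)⁻¹) atTop (𝓝 0) := hpow.inv_tendsto_atTop
  rw [accPt_principal_iff_clusterPt, ← mem_closure_iff_clusterPt]
  rcases eq_or_ne θ 0 with rfl | hθ0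
  · refine mem_closure_of_tendsto hinv ?_
    filter_upwards [eventually_ne_atTop 0] with p hp
    exact ⟨inv_pow_mem hb hp, (by positivity : ((b : ℝ) ^ p)⁻¹ ≠ 0)⟩
  by_cases hadic : ∃ (N : ℕ) (M : ℤ), b ^ N * θ = M
  · obtain ⟨N, M, hM⟩ := hadic
    have hsub : Tendsto (fun p : ℕ ↦ θ - ((b : ℝ) ^ p)⁻¹) atTop (𝓝 θ) := by
      simpa only [sub_zero] using hinv.const_sub θ
    refine mem_closure_of_tendsto hsub ?_
    filter_upwards [eventually_ge_atTop (2 * N)] with p hp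
    exact ⟨sub_inv_pow_mem hb hθ hθ0 hM hp, (sub_lt_self θ (by positivity)).ne⟩
  · push Not at hadic
    have hceil : Tendsto (fun N : ℕ ↦ ⌈b ^ N * θ⌉ / (b : ℝ) ^ N) atTop (𝓝 θ) := by
      refine ((tendsto_nat_ceil_mul_div_atTop hθ.1.1).comp hpow).congr fun N ↦ ?_
      have : 0 ≤ θ * (b : ℝ) ^ N := mul_nonneg hθ.1.1 (by positivity)
      rw [Function.comp_apply, natCast_ceil_eq_intCast_ceil this, mul_comm]
    refine mem_closure_of_tendsto hceil ?_
    filter_upwards [eventually_ne_atTop 0] with N hN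
    refine ⟨ceil_div_pow_mem hb hθ hN, fun h ↦ hadic N ⌈b ^ N * θ⌉ ?_⟩
    rw [mem_singleton_iff, div_eq_iff (by positivity)] at h
    rw [h, mul_comm]

theorem pow_nsmul_coe_notMem (hθ : θ ∈ arcAvoidingAngles b) (k : ℕ) :
    b ^ k • (θ : UnitAddCircle) ∉ ((↑) : ℝ → UnitAddCircle) '' Ioo 0 θ := by
  rintro ⟨u, ⟨hu0, huθ⟩, hu⟩
  rw [← AddCircle.coe_nsmul, ← sub_eq_zero, ← AddCircle.coe_sub, AddCircle.coe_eq_zero_iff] at hu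
  obtain ⟨n, hn⟩ := hu
  simp only [zsmul_eq_mul, mul_one, nsmul_eq_mul, Nat.cast_pow] at hn
  have := hθ.2 k (-n) (by push_cast; linarith)
  push_cast at this
  linarith

theorem volume_inter_Ioi_eq_zero (hb : 1 < b) {ε : ℝ} (hε : 0 < ε) :
    volume (arcAvoidingAngles b ∩ Ioi ε) = 0 := by
  set U : Set UnitAddCircle := (↑) '' Ioo 0 ε
  have hUo : IsOpen U := QuotientAddGroup.isOpenMap_coe _ isOpen_Ioo
  have hU0 : volume U ≠ 0 := (hUo.measure_pos volume ((nonempty_Ioo.mpr hε).image _)).ne'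
  have hnull := measure_forall_iterate_notMem_eq_zero_of_ergodic
    (AddCircle.ergodic_nsmul (T := 1) hb) hUo.measurableSet.nullMeasurableSet hU0
  have hpre := (AddCircle.measurePreserving_mk 1 0).quasiMeasurePreserving.preimage_null hnull
  rw [Measure.restrict_apply' measurableSet_Ioc] at hpre
  refine measure_mono_null ?_ hpre
  rintro θ ⟨hθ, hεθ : ε < θ⟩
  refine ⟨fun k hk ↦ ?_, hε.trans hεθ, by linarith [hθ.1.2]⟩
  rw [smul_iterate] at hk
  exact pow_nsmul_coe_notMem hθ k (image_mono (Ioo_subset_Ioo_right hεθ.le) hk)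

theorem volume_eq_zero (hb : 1 < b) : volume (arcAvoidingAngles b) = 0 := by
  have hcover : arcAvoidingAngles b ⊆
      {0} ∪ ⋃ m : ℕ, arcAvoidingAngles b ∩ Ioi (1 / ((m : ℝ) + 1)) := by
    intro θ hθ
    rcases hθ.1.1.eq_or_lt with h0 | h0
    · exact .inl h0.symm
    · obtain ⟨m, hm⟩ := exists_nat_one_div_lt h0
      exact .inr (mem_iUnion.mpr ⟨m, hθ, hm⟩)
  exact measure_mono_null hcover (measure_union_null (measure_singleton 0)
    (measure_iUnion_null fun m ↦ volume_inter_Ioi_eq_zero hb (by positivity)))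

end arcAvoidingAngles

theorem headXi_union_zero : HeadXi ∪ {0} = arcAvoidingAngles 2 := by
  rw [arcAvoidingAngles.eq_setOf_mul_le_sub_one one_lt_two]
  ext θ
  simp only [HeadXi, exists_int_le_sub_and_sub_le_one_iff, mem_union, mem_ofPred_eq,
    mem_singleton_iff, Nat.cast_ofNat]
  constructor
  · rintro (⟨h0, h1, h⟩ | rfl)
    · exact ⟨h0.le, by linarith, h⟩
    · exact ⟨le_rfl, by norm_num, fun k n hn ↦ by simpa using hn.le⟩
  · rintro ⟨h0, h1, h⟩
    exact h0.eq_or_lt.symm.imp (⟨·, by linarith, h⟩) Eq.symm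

theorem headXi_closed_perfect_totallyDisconnected_measure_zero_general {b : ℕ} (hb : 1 < b) :
    IsClosed (arcAvoidingAngles b) ∧ Perfect (arcAvoidingAngles b) ∧
      IsTotallyDisconnected (arcAvoidingAngles b) ∧ volume (arcAvoidingAngles b) = 0 :=
  have hclosed := arcAvoidingAngles.isClosed hb
  have hnull := arcAvoidingAngles.volume_eq_zero hb
  have hdense : Dense (arcAvoidingAngles b)ᶜ :=
    volume.dense_of_ae (measure_eq_zero_iff_ae_notMem.mp hnull)
  ⟨hclosed, ⟨hclosed, arcAvoidingAngles.preperfect hb⟩,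
    isTotallyDisconnected_iff_lt.mpr fun _ _ _ _ hlt ↦ hdense.exists_between hlt, hnull⟩

/-- The set `Ξ ∪ {0}` is closed, perfect, totally disconnected, and has Lebesgue
measure zero. -/
theorem headXi_closed_perfect_totallyDisconnected_measure_zero :
    IsClosed (HeadXi ∪ {0}) ∧ Perfect (HeadXi ∪ {0}) ∧
      IsTotallyDisconnected (HeadXi ∪ {0}) ∧
      MeasureTheory.volume (HeadXi ∪ {0}) = 0 :=
  headXi_union_zero ▸ headXi_closed_perfect_totallyDisconnected_measure_zero_general one_lt_two
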